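/- arXiv:2210.07006 — 3 statements merged into one kernel-verified Lean document; each statement's English description precedes it below -/
import Mathlib

section
/- (Performance difference identity for deterministic finite-horizon MDPs.) For any two policies π and μ and any initial state s0, the difference of their values equals the discounted sum, along the trajectory generated by π, of the advantage of π's action under μ's Q functions: V^π_0(s0) − V^μ_0(s0) = Σ_{t=0}^{T−1} γ^t · [Q^μ_t(s_t, π_t(s_t)) − Q^μ_t(s_t, μ_t(s_t))], where s_0 = s0 and s_{t+1} = f_t(s_t, π_t(s_t)) is the trajectory under π. -/
/-- Value function of a policy `π` in a deterministic finite-horizon decision process: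
`fhValue f r γ π n t s` is the value at state `s` and time `t` when `n` time steps
remain until the horizon; thus `V^π_t(s) = fhValue f r γ π (T - t) t s`, which
satisfies `V^π_T(s) = 0` and
`V^π_t(s) = r_t(s, π_t(s)) + γ·V^π_{t+1}(f_t(s, π_t(s)))`. -/
def fhValue {S : Type*} (f : ℕ → S → ℝ → S) (r : ℕ → S → ℝ → ℝ) (γ : ℝ)
    (π : ℕ → S → ℝ) : ℕ → ℕ → S → ℝ
  | 0, _, _ => 0
  | n + 1, t, s => r t s (π t s) + γ * fhValue f r γ π n (t + 1) (f t s (π t s))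

/-- Q function of a policy `μ` at time `t` with horizon `T`:
`Q^μ_t(s, a) = r_t(s, a) + γ·V^μ_{t+1}(f_t(s, a))`. -/
def fhQ {S : Type*} (f : ℕ → S → ℝ → S) (r : ℕ → S → ℝ → ℝ) (γ : ℝ)
    (μ : ℕ → S → ℝ) (T t : ℕ) (s : S) (a : ℝ) : ℝ :=
  r t s a + γ * fhValue f r γ μ (T - (t + 1)) (t + 1) (f t s a)

/-- Trajectory generated by policy `π` from initial state `s0`:
`s_0 = s0`, `s_{t+1} = f_t(s_t, π_t(s_t))`. -/
def fhTraj {S : Type*} (f : ℕ → S → ℝ → S) (π : ℕ → S → ℝ) (s0 : S) : ℕ → S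
  | 0 => s0
  | t + 1 => f t (fhTraj f π s0 t) (π t (fhTraj f π s0 t))

/-- Performance difference identity for deterministic finite-horizon
MDPs: for any two policies `π` and `μ` and any initial state `s0`,
`V^π_0(s0) − V^μ_0(s0) = Σ_{t=0}^{T−1} γ^t·[Q^μ_t(s_t, π_t(s_t)) − Q^μ_t(s_t, μ_t(s_t))]`,
where `s_t` is the trajectory under `π`. -/
theorem performance_difference {S : Type*}
    (f : ℕ → S → ℝ → S) (r : ℕ → S → ℝ → ℝ) (γ : ℝ) (hγ : 0 ≤ γ ∧ γ ≤ 1)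
    (T : ℕ) (π μ : ℕ → S → ℝ) (s0 : S) :
    fhValue f r γ π T 0 s0 - fhValue f r γ μ T 0 s0 =
      ∑ t ∈ Finset.range T, γ ^ t *
        (fhQ f r γ μ T t (fhTraj f π s0 t) (π t (fhTraj f π s0 t)) -
          fhQ f r γ μ T t (fhTraj f π s0 t) (μ t (fhTraj f π s0 t))) := by
  have key : ∀ k, k ≤ T → fhValue f r γ π T 0 s0 - fhValue f r γ μ T 0 s0 =
      ∑ t ∈ Finset.range k, γ ^ t *
        (fhQ f r γ μ T t (fhTraj f π s0 t) (π t (fhTraj f π s0 t)) -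
          fhQ f r γ μ T t (fhTraj f π s0 t) (μ t (fhTraj f π s0 t))) +
      γ ^ k * (fhValue f r γ π (T - k) k (fhTraj f π s0 k) -
        fhValue f r γ μ (T - k) k (fhTraj f π s0 k)) := by
    intro k
    induction k with
    | zero => intro _; simp [fhTraj]
    | succ k ih =>
      intro hk
      rw [ih (by omega), Finset.sum_range_succ]
      have h : T - k = (T - (k + 1)) + 1 := by omega
      rw [h]
      simp only [fhValue, fhQ, fhTraj]
      ring
  rw [key T le_rfl]
  simp [fhValue]
end

section
/- Suppose the exploration policy π agrees with the safe policy μ outside the exploration window, i.e. π_t = μ_t for all t ∉ [t1, t2], its actions deviate by at most ξ inside the window, i.e. |π_t(s) − μ_t(s)| ≤ ξ for all s ∈ S and all t ∈ [t1, t2], and for every t ∈ [t1, t2] and every s ∈ S the map a ↦ Q^μ_t(s, a) is L_Q-Lipschitz. Then for every initial state s0, |V^π_0(s0) − V^μ_0(s0)| ≤ L_Q · ξ · Σ_{t=t1}^{t2} γ^t. -/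
/-- if the exploration policy `π` agrees with the safe policy `μ`
outside the exploration window `[t1, t2]`, deviates from it by at most `ξ` inside
the window, and `a ↦ Q^μ_t(s, a)` is `L_Q`-Lipschitz for every `t ∈ [t1, t2]` and
state `s`, then `|V^π_0(s0) − V^μ_0(s0)| ≤ L_Q · ξ · Σ_{t=t1}^{t2} γ^t`. -/
theorem exploration_safety {S : Type*}
    (f : ℕ → S → ℝ → S) (r : ℕ → S → ℝ → ℝ) (γ : ℝ) (hγ : 0 ≤ γ ∧ γ ≤ 1)
    (T t1 t2 : ℕ) (ht12 : t1 ≤ t2) (ht2T : t2 ≤ T - 1) (hT : 1 ≤ T)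
    (ξ LQ : ℝ) (hξ : 0 < ξ) (hLQ : 0 < LQ)
    (π μ : ℕ → S → ℝ)
    (hout : ∀ t, (t < t1 ∨ t2 < t) → π t = μ t)
    (hin : ∀ t, t1 ≤ t → t ≤ t2 → ∀ s : S, |π t s - μ t s| ≤ ξ)
    (hlip : ∀ t, t1 ≤ t → t ≤ t2 → ∀ (s : S) (a1 a2 : ℝ),
      |fhQ f r γ μ T t s a1 - fhQ f r γ μ T t s a2| ≤ LQ * |a1 - a2|)
    (s0 : S) :
    |fhValue f r γ π T 0 s0 - fhValue f r γ μ T 0 s0| ≤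
      LQ * ξ * ∑ t ∈ Finset.Icc t1 t2, γ ^ t := by
  have key : ∀ n t, n + t = T → ∀ s : S,
      γ ^ t * |fhValue f r γ π n t s - fhValue f r γ μ n t s| ≤
        LQ * ξ * ∑ k ∈ Finset.Ico t T, (if t1 ≤ k ∧ k ≤ t2 then γ ^ k else 0) := by
    intro n
    induction n with
    | zero =>
      intro t ht s
      have h : t = T := by omega
      subst h
      simp [fhValue]
    | succ n ih =>
      intro t ht s
      have hn : T - (t + 1) = n := by omega
      have h1 := ih (t + 1) (by omega) (f t s (π t s))
      rw [Finset.sum_eq_sum_Ico_succ_bot (by omega : t < T), mul_add]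
      have hp : 0 ≤ γ ^ t := pow_nonneg hγ.1 t
      have hdec : fhValue f r γ π (n + 1) t s - fhValue f r γ μ (n + 1) t s =
          γ * (fhValue f r γ π n (t + 1) (f t s (π t s))
            - fhValue f r γ μ n (t + 1) (f t s (π t s)))
          + (fhQ f r γ μ T t s (π t s) - fhQ f r γ μ T t s (μ t s)) := by
        simp only [fhValue, fhQ, hn]
        ring
      have hQ : γ ^ t * |fhQ f r γ μ T t s (π t s) - fhQ f r γ μ T t s (μ t s)| ≤
          LQ * ξ * (if t1 ≤ t ∧ t ≤ t2 then γ ^ t else 0) := by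
        split_ifs with hc
        · have h2 := hlip t hc.1 hc.2 s (π t s) (μ t s)
          have h3 := mul_le_mul_of_nonneg_left (hin t hc.1 hc.2 s) hLQ.le
          have h4 := mul_le_mul_of_nonneg_left (h2.trans h3) hp
          linarith
        · have h2 : π t = μ t := hout t (by omega)
          simp [h2]
      have habs := abs_add_le (γ * (fhValue f r γ π n (t + 1) (f t s (π t s))
            - fhValue f r γ μ n (t + 1) (f t s (π t s))))
          (fhQ f r γ μ T t s (π t s) - fhQ f r γ μ T t s (μ t s))
      rw [← hdec, abs_mul, abs_of_nonneg hγ.1] at habs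
      have h5 := mul_le_mul_of_nonneg_left habs hp
      rw [pow_succ] at h1
      linarith
  have h := key T 0 (by omega) s0
  rw [pow_zero, one_mul, ← Finset.sum_filter] at h
  have hs : (Finset.Ico 0 T).filter (fun k => t1 ≤ k ∧ k ≤ t2) = Finset.Icc t1 t2 := by
    ext k
    simp only [Finset.mem_filter, Finset.mem_Ico, Finset.mem_Icc]
    omega
  rwa [hs] at h
end

section
/- (Theorem 3, safety of the exploration policy.) Suppose the exploration policy π agrees with the safe policy μ outside the exploration window, i.e. π_t = μ_t for all t ∉ [t1, t2], its actions deviate by at most ξ inside the window, i.e. |π_t(s) − μ_t(s)| ≤ ξ for all s ∈ S and all t ∈ [t1, t2], and for every t ∈ [t1, t2] and every s ∈ S the map a ↦ Q^μ_t(s, a) is L_Q-Lipschitz with L_Q = [v_M + γ·(k3 + k4)·p_M]·(k1 + k2). Then for every initial state s0, |V^π_0(s0) − V^μ_0(s0)| ≤ ξ · γ^{t1} · [v_M + γ·(k3 + k4)·p_M]·(k1 + k2) · ΔT, where ΔT = t2 − t1 + 1. -/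
/-- Theorem 3, safety of the exploration policy: if the exploration
policy `π` agrees with the safe policy `μ` outside the window `[t1, t2]`, deviates
by at most `ξ` inside the window, and `a ↦ Q^μ_t(s, a)` is `L_Q`-Lipschitz with
`L_Q = [v_M + γ·(k3 + k4)·p_M]·(k1 + k2)`, then
`|V^π_0(s0) − V^μ_0(s0)| ≤ ξ·γ^{t1}·[v_M + γ·(k3 + k4)·p_M]·(k1 + k2)·ΔT`
with `ΔT = t2 − t1 + 1`. -/
theorem exploration_safety_bound {S : Type*}
    (f : ℕ → S → ℝ → S) (r : ℕ → S → ℝ → ℝ) (γ : ℝ) (hγ : 0 ≤ γ ∧ γ ≤ 1)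
    (T t1 t2 : ℕ) (ht12 : t1 ≤ t2) (ht2T : t2 ≤ T - 1) (hT : 1 ≤ T)
    (ξ vM pM k1 k2 k3 k4 : ℝ) (hξ : 0 < ξ)
    (hvM : 0 < vM) (hpM : 0 < pM)
    (hk1 : 0 < k1) (hk2 : 0 < k2) (hk3 : 0 < k3) (hk4 : 0 < k4)
    (π μ : ℕ → S → ℝ)
    (hout : ∀ t, (t < t1 ∨ t2 < t) → π t = μ t)
    (hin : ∀ t, t1 ≤ t → t ≤ t2 → ∀ s : S, |π t s - μ t s| ≤ ξ)
    (hlip : ∀ t, t1 ≤ t → t ≤ t2 → ∀ (s : S) (a1 a2 : ℝ),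
      |fhQ f r γ μ T t s a1 - fhQ f r γ μ T t s a2| ≤
        (vM + γ * (k3 + k4) * pM) * (k1 + k2) * |a1 - a2|)
    (s0 : S) :
    |fhValue f r γ π T 0 s0 - fhValue f r γ μ T 0 s0| ≤
      ξ * γ ^ t1 * (vM + γ * (k3 + k4) * pM) * (k1 + k2) * ((t2 - t1 + 1 : ℕ) : ℝ) := by
  obtain ⟨hγ0, hγ1⟩ := hγ
  have hL : 0 ≤ (vM + γ * (k3 + k4) * pM) * (k1 + k2) := by positivity
  generalize hLe : (vM + γ * (k3 + k4) * pM) * (k1 + k2) = L at hL hlip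
  have hC : 0 ≤ L * ξ := by positivity
  have phase1 : ∀ n t, n + t = T → t1 ≤ t → ∀ s : S,
      |fhValue f r γ π n t s - fhValue f r γ μ n t s| ≤ L * ξ * ((t2 + 1 - t : ℕ) : ℝ) := by
    intro n
    induction n with
    | zero =>
      intro t _ _ s
      simp only [fhValue, sub_self, abs_zero]
      positivity
    | succ n ih =>
      intro t hnt ht s
      have h1 := ih (t + 1) (by omega) (by omega) (f t s (π t s))
      have h2 : |γ * (fhValue f r γ π n (t + 1) (f t s (π t s)) -
          fhValue f r γ μ n (t + 1) (f t s (π t s)))| ≤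
          L * ξ * ((t2 + 1 - (t + 1) : ℕ) : ℝ) := by
        rw [abs_mul, abs_of_nonneg hγ0]
        exact (mul_le_of_le_one_left (abs_nonneg _) hγ1).trans h1
      by_cases htt : t ≤ t2
      · have h3 := hlip t ht htt s (π t s) (μ t s)
        have h4 : L * |π t s - μ t s| ≤ L * ξ :=
          mul_le_mul_of_nonneg_left (hin t ht htt s) hL
        have hT' : T - (t + 1) = n := by omega
        simp only [fhQ, hT'] at h3
        have h5 : ((t2 + 1 - t : ℕ) : ℝ) = ((t2 + 1 - (t + 1) : ℕ) : ℝ) + 1 := by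
          have : t2 + 1 - t = (t2 + 1 - (t + 1)) + 1 := by omega
          rw [this]; push_cast; rfl
        rw [h5, mul_add, mul_one]
        simp only [fhValue]
        rw [abs_le] at *
        constructor <;> linarith [h2.1, h2.2, h3.1, h3.2]
      · have hp := hout t (Or.inr (by omega))
        have h5 : t2 + 1 - t = t2 + 1 - (t + 1) := by omega
        rw [h5]
        simp only [fhValue]
        rw [hp] at h2 ⊢
        rw [add_sub_add_left_eq_sub, ← mul_sub]
        exact h2
  have phase2 : ∀ d t, d + t = t1 → ∀ s : S,
      |fhValue f r γ π (T - t) t s - fhValue f r γ μ (T - t) t s| ≤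
        γ ^ d * (L * ξ * ((t2 + 1 - t1 : ℕ) : ℝ)) := by
    intro d
    induction d with
    | zero =>
      intro t hd s
      have : t = t1 := by omega
      subst this
      simpa using phase1 (T - t) t (by omega) le_rfl s
    | succ d ih =>
      intro t hd s
      have hp := hout t (Or.inl (by omega))
      have hT' : T - t = (T - (t + 1)) + 1 := by omega
      have h1 := ih (t + 1) (by omega) (f t s (μ t s))
      rw [hT']
      simp only [fhValue]
      rw [hp, add_sub_add_left_eq_sub, ← mul_sub, abs_mul, abs_of_nonneg hγ0, pow_succ',
        mul_assoc]
      exact mul_le_mul_of_nonneg_left h1 hγ0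
  have h := phase2 t1 0 (by omega) s0
  have h6 : t2 + 1 - t1 = t2 - t1 + 1 := by omega
  rw [h6, Nat.sub_zero] at h
  refine h.trans (le_of_eq ?_)
  rw [← hLe]
  ring
end
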